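/- Let R be a commutative ring, S ⊆ R a multiplicative subset, 𝒞 an R-linear abelian category, and 𝒟 an S⁻¹R-linear abelian category. If G : 𝒞 → 𝒟 is an R-linear exact functor, then the induced functor 𝒞 ⊗_R S⁻¹R → 𝒟 (agreeing with G on objects and with the S⁻¹R-linear extension of G on morphisms) is exact. -/

import Mathlib

open CategoryTheory TensorProduct

universe w₂ w v₂ v u

/-- The base change `𝒞 ⊗_R R'` of an `R`-linear category `𝒞` along `R → R'`:
same objects as `𝒞`, morphisms `Hom_𝒞(M,N) ⊗_R R'`. -/
structure BaseChange (R : Type u) [CommRing R] (R' : Type u) [CommRing R'] [Algebra R R']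
    (C : Type v) [Category.{w} C] [Preadditive C] [Linear R C] where
  obj : C

variable (R : Type u) [CommRing R] (R' : Type u) [CommRing R'] [Algebra R R']
variable (C : Type v) [Category.{w} C] [Preadditive C] [Linear R C]

variable {C}

/-- Composition in `𝒞` as an `R`-bilinear map. -/
noncomputable def compBilinear (X Y Z : C) : (X ⟶ Y) →ₗ[R] (Y ⟶ Z) →ₗ[R] (X ⟶ Z) where
  toFun f := Linear.leftComp R Z f
  map_add' f f' := by ext g; simp [Linear.leftComp]
  map_smul' r f := by ext g; simp [Linear.leftComp]

/-- Composition in the base change category : `(f ⊗ r) ≫ (g ⊗ s) = (f ≫ g) ⊗ rs`. -/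
noncomputable def compMap (X Y Z : C) :
    (((X ⟶ Y) ⊗[R] R') ⊗[R] ((Y ⟶ Z) ⊗[R] R')) →ₗ[R] ((X ⟶ Z) ⊗[R] R') :=
  (TensorProduct.map (TensorProduct.lift (compBilinear R X Y Z)) (LinearMap.mul' R R')).comp
    (TensorProduct.tensorTensorTensorComm R (X ⟶ Y) R' (Y ⟶ Z) R').toLinearMap

variable (C)

noncomputable instance : Category (BaseChange R R' C) where
  Hom X Y := (X.obj ⟶ Y.obj) ⊗[R] R'
  id X := 𝟙 X.obj ⊗ₜ[R] (1 : R')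
  comp {X Y Z} f g := compMap R R' X.obj Y.obj Z.obj (f ⊗ₜ[R] g)
  id_comp := by
    intro X Y f
    show compMap R R' _ _ _ (_ ⊗ₜ[R] f) = f
    induction f using TensorProduct.induction_on with
    | zero => simp
    | tmul g r => simp [compMap, compBilinear, Linear.leftComp]
    | add f₁ f₂ h₁ h₂ => rw [tmul_add, map_add, h₁, h₂]
  comp_id := by
    intro X Y f
    show compMap R R' _ _ _ (f ⊗ₜ[R] _) = f
    induction f using TensorProduct.induction_on with
    | zero => simp
    | tmul g r => simp [compMap, compBilinear, Linear.leftComp]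
    | add f₁ f₂ h₁ h₂ => rw [add_tmul, map_add, h₁, h₂]
  assoc := by
    intro W X Y Z f g h
    show compMap R R' _ _ _ ((compMap R R' _ _ _ (f ⊗ₜ[R] g)) ⊗ₜ[R] h)
      = compMap R R' _ _ _ (f ⊗ₜ[R] (compMap R R' _ _ _ (g ⊗ₜ[R] h)))
    induction f using TensorProduct.induction_on with
    | zero => simp
    | add f₁ f₂ h₁ h₂ => simp only [add_tmul, tmul_add, map_add, h₁, h₂]
    | tmul a r =>
      induction g using TensorProduct.induction_on with
      | zero => simp
      | add g₁ g₂ h₁ h₂ => simp only [add_tmul, tmul_add, map_add, h₁, h₂]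
      | tmul b s =>
        induction h using TensorProduct.induction_on with
        | zero => simp
        | add h₁ h₂ k₁ k₂ => simp only [add_tmul, tmul_add, map_add, k₁, k₂]
        | tmul c t => simp [compMap, compBilinear, Linear.leftComp, mul_assoc]

section Induced

variable {C}
variable (D : Type v₂) [Category.{w₂} D] [Preadditive D] [Linear R D] [Linear R' D]

variable {D}

/-- The `R`-bilinear map `(f, r) ↦ r • G(f)` underlying the induced functor. -/
noncomputable def inducedBil (G : C ⥤ D) [G.Additive] [G.Linear R]
    (hcompat : ∀ (X Y : D) (c : R) (f : X ⟶ Y), c • f = algebraMap R R' c • f)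
    (M N : C) : (M ⟶ N) →ₗ[R] R' →ₗ[R] (G.obj M ⟶ G.obj N) where
  toFun f :=
    { toFun := fun r => r • G.map f
      map_add' := fun r s => add_smul r s _
      map_smul' := fun c r => by
        dsimp
        rw [hcompat _ _ c (r • G.map f), ← mul_smul, Algebra.smul_def] }
  map_add' f f' := by ext r; simp [smul_add]
  map_smul' c f := by
    ext r
    dsimp
    rw [G.map_smul, hcompat _ _ c (r • G.map f), hcompat _ _ c (G.map f),
      ← mul_smul, ← mul_smul, mul_comm]

/-- The functor `𝒞 ⊗_R R' → 𝒟` induced by an `R`-linear functor `G : 𝒞 → 𝒟` into an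
`R'`-linear category: it agrees with `G` on objects and with the `R'`-linear extension of `G`
on morphisms. -/
noncomputable def inducedFunctor (G : C ⥤ D) [G.Additive] [G.Linear R]
    (hcompat : ∀ (X Y : D) (c : R) (f : X ⟶ Y), c • f = algebraMap R R' c • f) :
    BaseChange R R' C ⥤ D where
  obj X := G.obj X.obj
  map {X Y} f := TensorProduct.lift (inducedBil R R' G hcompat X.obj Y.obj) f
  map_id := by
    intro X
    show TensorProduct.lift _ (𝟙 X.obj ⊗ₜ[R] (1 : R')) = _
    simp [inducedBil]
  map_comp := by
    intro X Y Z f g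
    show TensorProduct.lift _ (compMap R R' _ _ _ (f ⊗ₜ[R] g)) =
      TensorProduct.lift _ f ≫ TensorProduct.lift _ g
    induction f using TensorProduct.induction_on with
    | zero => simp
    | add f₁ f₂ h₁ h₂ =>
      simp only [add_tmul, map_add, Preadditive.add_comp, h₁, h₂]
    | tmul a r =>
      induction g using TensorProduct.induction_on with
      | zero => simp
      | add g₁ g₂ h₁ h₂ =>
        simp only [tmul_add, map_add, Preadditive.comp_add, h₁, h₂]
      | tmul b s =>
        simp only [compMap, compBilinear, inducedBil, Linear.leftComp, mul_smul,
          Linear.smul_comp, Linear.comp_smul, LinearMap.coe_comp, LinearEquiv.coe_coe,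
          Function.comp_apply, TensorProduct.tensorTensorTensorComm_tmul,
          TensorProduct.map_tmul, TensorProduct.lift.tmul, LinearMap.coe_mk,
          AddHom.coe_mk, LinearMap.mul'_apply, G.map_comp]
        exact smul_comm r s _

end Induced

/-!
Over a flat `R`-algebra `R'` the functors `Hom(W, -) ⊗_R R'` and `Hom(-, W) ⊗_R R'` stay left
exact, so `Q : 𝒞 ⥤ 𝒞 ⊗_R R'` preserves kernels and cokernels. If moreover `R' = S⁻¹R`, clearing
denominators shows that every arrow of `𝒞 ⊗_R R'` is isomorphic to one of the form `Q.map f`. Hence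
the kernels and cokernels of `𝒞 ⊗_R R'` all come from `𝒞`, and a functor out of it is exact as soon
as its restriction along `Q` is. The restriction of the induced functor is `G`.
-/

open Limits

section EssSurjMapArrow

variable {A B E : Type*} [Category* A] [Category* B] [Category* E]

lemma essSurj_of_essSurj_mapArrow (Q : A ⥤ B) [Q.mapArrow.EssSurj] : Q.EssSurj where
  mem_essImage Y :=
    have ⟨f, ⟨e⟩⟩ := Functor.EssSurj.mem_essImage (F := Q.mapArrow) (Arrow.mk (𝟙 Y))
    ⟨f.left, ⟨Arrow.leftFunc.mapIso e⟩⟩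

section HasZeroMorphisms

variable [HasZeroMorphisms A] [HasZeroMorphisms B] [HasZeroMorphisms E]

/-- The diagrams whose limits are the kernels of two isomorphic arrows are isomorphic. -/
def parallelPairZeroIsoOfArrowIso {X Y X' Y' : B} {f : X ⟶ Y} {g : X' ⟶ Y'}
    (e : Arrow.mk f ≅ Arrow.mk g) : parallelPair f 0 ≅ parallelPair g 0 :=
  parallelPair.ext (Arrow.leftFunc.mapIso e) (Arrow.rightFunc.mapIso e)
    (Arrow.w e.hom).symm (zero_comp.trans comp_zero.symm)

variable (Q : A ⥤ B) [Q.PreservesZeroMorphisms] [Q.mapArrow.EssSurj]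
  (H : B ⥤ E) [H.PreservesZeroMorphisms]

lemma hasKernels_of_essSurj_mapArrow [HasKernels A]
    [∀ {X Y : A} (f : X ⟶ Y), PreservesLimit (parallelPair f 0) Q] : HasKernels B where
  has_limit f := by
    obtain ⟨f₀, ⟨e⟩⟩ := Functor.EssSurj.mem_essImage (F := Q.mapArrow) (Arrow.mk f)
    have : HasKernel (Q.map f₀.hom) := inferInstance
    exact hasLimit_of_iso (parallelPairZeroIsoOfArrowIso e)

lemma hasCokernels_of_essSurj_mapArrow [HasCokernels A]
    [∀ {X Y : A} (f : X ⟶ Y), PreservesColimit (parallelPair f 0) Q] : HasCokernels B where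
  has_colimit f := by
    obtain ⟨f₀, ⟨e⟩⟩ := Functor.EssSurj.mem_essImage (F := Q.mapArrow) (Arrow.mk f)
    have : HasCokernel (Q.map f₀.hom) := inferInstance
    exact hasColimit_of_iso (parallelPairZeroIsoOfArrowIso e).symm

lemma preservesKernel_of_comp_of_essSurj_mapArrow [HasKernels A]
    [∀ {X Y : A} (f : X ⟶ Y), PreservesLimit (parallelPair f 0) Q]
    [∀ {X Y : A} (f : X ⟶ Y), PreservesLimit (parallelPair f 0) (Q ⋙ H)]
    {X Y : B} (f : X ⟶ Y) : PreservesLimit (parallelPair f 0) H := by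
  obtain ⟨f₀, ⟨e⟩⟩ := Functor.EssSurj.mem_essImage (F := Q.mapArrow) (Arrow.mk f)
  have hker := kernelIsKernel f₀.hom
  have : PreservesLimit (parallelPair (Q.map f₀.hom) 0) H :=
    preservesLimit_of_preserves_limit_cone (KernelFork.mapIsLimit _ hker Q)
      ((KernelFork.isLimitMapConeEquiv _ H).symm (KernelFork.mapIsLimit _ hker (Q ⋙ H)))
  exact preservesLimit_of_iso_diagram H (parallelPairZeroIsoOfArrowIso e)

lemma preservesCokernel_of_comp_of_essSurj_mapArrow [HasCokernels A]
    [∀ {X Y : A} (f : X ⟶ Y), PreservesColimit (parallelPair f 0) Q]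
    [∀ {X Y : A} (f : X ⟶ Y), PreservesColimit (parallelPair f 0) (Q ⋙ H)]
    {X Y : B} (f : X ⟶ Y) : PreservesColimit (parallelPair f 0) H := by
  obtain ⟨f₀, ⟨e⟩⟩ := Functor.EssSurj.mem_essImage (F := Q.mapArrow) (Arrow.mk f)
  have hcoker := cokernelIsCokernel f₀.hom
  have : PreservesColimit (parallelPair (Q.map f₀.hom) 0) H :=
    preservesColimit_of_preserves_colimit_cocone (CokernelCofork.mapIsColimit _ hcoker Q)
      ((CokernelCofork.isColimitMapCoconeEquiv _ H).symm
        (CokernelCofork.mapIsColimit _ hcoker (Q ⋙ H)))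
  exact preservesColimit_of_iso_diagram H (parallelPairZeroIsoOfArrowIso e)

end HasZeroMorphisms

section Preadditive

variable [Preadditive A] [Preadditive B] [Preadditive E]
  (Q : A ⥤ B) [Q.Additive] [Q.mapArrow.EssSurj] (H : B ⥤ E) [H.Additive]

theorem preservesFiniteLimits_of_comp_of_essSurj_mapArrow [HasFiniteLimits A]
    [∀ {X Y : A} (f : X ⟶ Y), PreservesLimit (parallelPair f 0) Q]
    [PreservesFiniteLimits (Q ⋙ H)] : PreservesFiniteLimits H := by
  have := essSurj_of_essSurj_mapArrow Q
  have : HasFiniteProducts B := Q.hasFiniteProducts_of_additive_of_essSurj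
  have := hasKernels_of_essSurj_mapArrow Q
  have : HasEqualizers B := Preadditive.hasEqualizers_of_hasKernels
  have {X Y : B} (f : X ⟶ Y) := preservesKernel_of_comp_of_essSurj_mapArrow Q H f
  have : HasBinaryBiproducts B := .of_hasBinaryProducts
  have := H.preservesEqualizers_of_preservesKernels
  exact preservesFiniteLimits_of_preservesEqualizers_and_finiteProducts H

theorem preservesFiniteColimits_of_comp_of_essSurj_mapArrow [HasFiniteColimits A]
    [∀ {X Y : A} (f : X ⟶ Y), PreservesColimit (parallelPair f 0) Q]
    [PreservesFiniteColimits (Q ⋙ H)] : PreservesFiniteColimits H := by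
  have := essSurj_of_essSurj_mapArrow Q
  have : HasFiniteBiproducts A := .of_hasFiniteCoproducts
  have : HasFiniteProducts B := Q.hasFiniteProducts_of_additive_of_essSurj
  have : HasFiniteBiproducts B := .of_hasFiniteProducts
  have := hasCokernels_of_essSurj_mapArrow Q
  have : HasCoequalizers B := Preadditive.hasCoequalizers_of_hasCokernels
  have {X Y : B} (f : X ⟶ Y) := preservesCokernel_of_comp_of_essSurj_mapArrow Q H f
  have := hasBinaryBiproducts_of_finite_biproducts B
  have := H.preservesCoequalizers_of_preservesCokernels
  exact preservesFiniteColimits_of_preservesCoequalizers_and_finiteCoproducts H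

end Preadditive

end EssSurjMapArrow

section HomExact

variable {R C} {X Y : C} {f : X ⟶ Y}

lemma exact_rightComp_of_isLimit {c : KernelFork f} (hc : IsLimit c) (W : C) :
    Function.Exact (Linear.rightComp R W c.ι) (Linear.rightComp R W f) := fun k =>
  ⟨fun hk => ⟨hc.lift (KernelFork.ofι k hk), Fork.IsLimit.lift_ι hc⟩,
    by rintro ⟨l, rfl⟩; simp⟩

lemma exact_leftComp_of_isColimit {c : CokernelCofork f} (hc : IsColimit c) (W : C) :
    Function.Exact (Linear.leftComp R W c.π) (Linear.leftComp R W f) := fun k =>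
  ⟨fun hk => ⟨hc.desc (CokernelCofork.ofπ k hk), Cofork.IsColimit.π_desc hc⟩,
    by rintro ⟨l, rfl⟩; simp⟩

end HomExact

namespace BaseChange

variable {R R' C}

noncomputable instance : Preadditive (BaseChange R R' C) where
  homGroup X Y := inferInstanceAs (AddCommGroup ((X.obj ⟶ Y.obj) ⊗[R] R'))
  add_comp _ _ _ _ _ _ :=
    (congrArg (compMap R R' _ _ _) (add_tmul _ _ _)).trans (map_add _ _ _)
  comp_add _ _ _ _ _ _ :=
    (congrArg (compMap R R' _ _ _) (tmul_add _ _ _)).trans (map_add _ _ _)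

/-- The identification of `Hom_{𝒞 ⊗_R R'}(X, Y)` with `Hom_𝒞(X, Y) ⊗_R R'`. It is the identity map;
it serves to keep the two types apart for elaboration. -/
noncomputable def homEquiv {X Y : BaseChange R R' C} : (X ⟶ Y) ≃+ (X.obj ⟶ Y.obj) ⊗[R] R' :=
  AddEquiv.refl _

/-- The morphism `f ⊗ r` of `𝒞 ⊗_R R'`. -/
noncomputable def tmulHom {X Y : BaseChange R R' C} (f : X.obj ⟶ Y.obj) (r : R') : X ⟶ Y :=
  homEquiv.symm (f ⊗ₜ[R] r)

@[simp]
lemma homEquiv_tmulHom {X Y : BaseChange R R' C} (f : X.obj ⟶ Y.obj) (r : R') :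
    homEquiv (tmulHom f r : X ⟶ Y) = f ⊗ₜ[R] r := rfl

lemma tmulHom_comp_tmulHom {X Y Z : BaseChange R R' C} (f : X.obj ⟶ Y.obj) (g : Y.obj ⟶ Z.obj)
    (r s : R') : tmulHom f r ≫ tmulHom g s = (tmulHom (f ≫ g) (r * s) : X ⟶ Z) := by
  change compMap R R' _ _ _ ((f ⊗ₜ[R] r) ⊗ₜ[R] (g ⊗ₜ[R] s)) = (f ≫ g) ⊗ₜ[R] (r * s)
  simp [compMap, compBilinear, Linear.leftComp]

@[elab_as_elim]
lemma hom_induction {X Y : BaseChange R R' C} {motive : (X ⟶ Y) → Prop}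
    (zero : motive 0) (tmul : ∀ (f : X.obj ⟶ Y.obj) (r : R'), motive (tmulHom f r))
    (add : ∀ f g, motive f → motive g → motive (f + g)) (f : X ⟶ Y) : motive f :=
  TensorProduct.induction_on (motive := fun t => motive (homEquiv.symm t)) (homEquiv f)
    zero tmul fun f g => add (homEquiv.symm f) (homEquiv.symm g)

variable (R R' C) in
/-- The canonical functor `𝒞 ⥤ 𝒞 ⊗_R R'`, `f ↦ f ⊗ 1`. -/
noncomputable def canonicalFunctor : C ⥤ BaseChange R R' C where
  obj X := ⟨X⟩
  map f := tmulHom f 1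
  map_id _ := rfl
  map_comp f g := by rw [tmulHom_comp_tmulHom, one_mul]

instance : (canonicalFunctor R R' C).Additive where
  map_add := TensorProduct.add_tmul _ _ _

lemma homEquiv_comp_tmulHom_one {W X Y : BaseChange R R' C} (k : W ⟶ X) (f : X.obj ⟶ Y.obj) :
    homEquiv (k ≫ (tmulHom f 1 : X ⟶ Y)) =
      (Linear.rightComp R W.obj f).rTensor R' (homEquiv k) := by
  induction k using hom_induction with
  | zero => simp
  | tmul g r => simp [tmulHom_comp_tmulHom]
  | add k₁ k₂ h₁ h₂ => rw [Preadditive.add_comp, map_add, h₁, h₂, map_add, map_add]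

lemma homEquiv_tmulHom_one_comp {X Y W : BaseChange R R' C} (f : X.obj ⟶ Y.obj) (k : Y ⟶ W) :
    homEquiv ((tmulHom f 1 : X ⟶ Y) ≫ k) =
      (Linear.leftComp R W.obj f).rTensor R' (homEquiv k) := by
  induction k using hom_induction with
  | zero => simp
  | tmul g r => simp [tmulHom_comp_tmulHom]
  | add k₁ k₂ h₁ h₂ => rw [Preadditive.comp_add, map_add, h₁, h₂, map_add, map_add]

section Flat

variable [Module.Flat R R']

lemma mono_tmulHom_one {X Y : BaseChange R R' C} (f : X.obj ⟶ Y.obj) [Mono f] :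
    Mono (tmulHom f 1 : X ⟶ Y) where
  right_cancellation {W} g h hgh := by
    have hinj : Function.Injective (Linear.rightComp R W.obj f) := fun _ _ => (cancel_mono f).1
    apply homEquiv.injective
    apply Module.Flat.rTensor_preserves_injective_linearMap (M := R') _ hinj
    rw [← homEquiv_comp_tmulHom_one, hgh, homEquiv_comp_tmulHom_one]

lemma epi_tmulHom_one {X Y : BaseChange R R' C} (f : X.obj ⟶ Y.obj) [Epi f] :
    Epi (tmulHom f 1 : X ⟶ Y) where
  left_cancellation {W} g h hgh := by
    have hinj : Function.Injective (Linear.leftComp R W.obj f) := fun _ _ => (cancel_epi f).1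
    apply homEquiv.injective
    apply Module.Flat.rTensor_preserves_injective_linearMap (M := R') _ hinj
    rw [← homEquiv_tmulHom_one_comp, hgh, homEquiv_tmulHom_one_comp]

lemma exists_comp_tmulHom_one_eq {W K X Y : BaseChange R R' C} {i : K.obj ⟶ X.obj}
    {f : X.obj ⟶ Y.obj}
    (hif : Function.Exact (Linear.rightComp R W.obj i) (Linear.rightComp R W.obj f))
    {k : W ⟶ X} (hk : k ≫ (tmulHom f 1 : X ⟶ Y) = 0) :
    ∃ l : W ⟶ K, l ≫ tmulHom i 1 = k := by
  have hk' : (Linear.rightComp R W.obj f).rTensor R' (homEquiv k) = 0 := by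
    rw [← homEquiv_comp_tmulHom_one, hk, map_zero]
  obtain ⟨l, hl⟩ := (Module.Flat.rTensor_exact R' hif _).1 hk'
  refine ⟨homEquiv.symm l, homEquiv.injective ?_⟩
  rw [homEquiv_comp_tmulHom_one, AddEquiv.apply_symm_apply, hl]

lemma exists_tmulHom_one_comp_eq {X Y Z W : BaseChange R R' C} {f : X.obj ⟶ Y.obj}
    {p : Y.obj ⟶ Z.obj}
    (hfp : Function.Exact (Linear.leftComp R W.obj p) (Linear.leftComp R W.obj f))
    {k : Y ⟶ W} (hk : (tmulHom f 1 : X ⟶ Y) ≫ k = 0) :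
    ∃ l : Z ⟶ W, tmulHom p 1 ≫ l = k := by
  have hk' : (Linear.leftComp R W.obj f).rTensor R' (homEquiv k) = 0 := by
    rw [← homEquiv_tmulHom_one_comp, hk, map_zero]
  obtain ⟨l, hl⟩ := (Module.Flat.rTensor_exact R' hfp _).1 hk'
  refine ⟨homEquiv.symm l, homEquiv.injective ?_⟩
  rw [homEquiv_tmulHom_one_comp, AddEquiv.apply_symm_apply, hl]

instance preservesMonomorphisms_canonicalFunctor :
    (canonicalFunctor R R' C).PreservesMonomorphisms where
  preserves f _ := mono_tmulHom_one f

instance preservesEpimorphisms_canonicalFunctor :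
    (canonicalFunctor R R' C).PreservesEpimorphisms where
  preserves f _ := epi_tmulHom_one f

instance preservesKernel_canonicalFunctor {X Y : C} (f : X ⟶ Y) :
    PreservesLimit (parallelPair f 0) (canonicalFunctor R R' C) where
  preserves {c} hc := by
    have : Mono (Fork.ι c) := mono_of_isLimit_fork hc
    exact ⟨(KernelFork.isLimitMapConeEquiv c _).symm
      (KernelFork.IsLimit.ofι' _ (KernelFork.map_condition c _) fun k hk =>
        Classical.indefiniteDescription _
          (exists_comp_tmulHom_one_eq (exact_rightComp_of_isLimit hc _) hk))⟩

instance preservesCokernel_canonicalFunctor {X Y : C} (f : X ⟶ Y) :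
    PreservesColimit (parallelPair f 0) (canonicalFunctor R R' C) where
  preserves {c} hc := by
    have : Epi (Cofork.π c) := epi_of_isColimit_cofork hc
    exact ⟨(CokernelCofork.isColimitMapCoconeEquiv c _).symm
      (CokernelCofork.IsColimit.ofπ' _ (CokernelCofork.map_condition c _) fun k hk =>
        Classical.indefiniteDescription _
          (exists_tmulHom_one_comp_eq (exact_leftComp_of_isColimit hc _) hk))⟩

end Flat

section IsLocalization

/-- Multiplication by a unit of `R'`, as an automorphism of an object of `𝒞 ⊗_R R'`. -/
noncomputable def unitIso (X : BaseChange R R' C) (r : R'ˣ) : X ≅ X where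
  hom := tmulHom (𝟙 X.obj) r
  inv := tmulHom (𝟙 X.obj) ↑r⁻¹
  hom_inv_id := by rw [tmulHom_comp_tmulHom, Category.id_comp, r.mul_inv]; rfl
  inv_hom_id := by rw [tmulHom_comp_tmulHom, Category.id_comp, r.inv_mul]; rfl

lemma homEquiv_comp_tmulHom_id_algebraMap {X Y : BaseChange R R' C} (f : X ⟶ Y) (c : R) :
    homEquiv (f ≫ tmulHom (𝟙 Y.obj) (algebraMap R R' c)) = c • homEquiv f := by
  induction f using hom_induction with
  | zero => simp
  | tmul g r =>
    rw [tmulHom_comp_tmulHom, Category.comp_id, mul_comm, ← Algebra.smul_def, homEquiv_tmulHom,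
      homEquiv_tmulHom, TensorProduct.tmul_smul]
  | add f₁ f₂ h₁ h₂ => rw [Preadditive.add_comp, map_add, h₁, h₂, map_add, smul_add]

lemma exists_comp_tmulHom_id_eq_map (S : Submonoid R) [IsLocalization S R']
    {X Y : BaseChange R R' C} (f : X ⟶ Y) :
    ∃ (f₀ : X.obj ⟶ Y.obj) (s : S),
      f ≫ tmulHom (𝟙 Y.obj) (algebraMap R R' s) = (canonicalFunctor R R' C).map f₀ := by
  obtain ⟨⟨f₀, s⟩, h⟩ := IsLocalizedModule.surj S
    (TensorProduct.mk R R' (X.obj ⟶ Y.obj) 1) (TensorProduct.comm R _ _ (homEquiv f))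
  refine ⟨f₀, s, homEquiv.injective ?_⟩
  apply (TensorProduct.comm R (X.obj ⟶ Y.obj) R').injective
  rw [homEquiv_comp_tmulHom_id_algebraMap, map_smul]
  exact h

variable (R' C) in
theorem essSurj_mapArrow_canonicalFunctor (S : Submonoid R) [IsLocalization S R'] :
    (canonicalFunctor R R' C).mapArrow.EssSurj where
  mem_essImage f := by
    obtain ⟨f₀, s, h⟩ := exists_comp_tmulHom_id_eq_map S f.hom
    let e : f ≅ (canonicalFunctor R R' C).mapArrow.obj (Arrow.mk f₀) :=
      Arrow.isoMk (Iso.refl _) (unitIso f.right (IsLocalization.map_units R' s).unit)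
        ((Category.id_comp _).trans h.symm)
    exact ⟨_, ⟨e.symm⟩⟩

end IsLocalization

end BaseChange

section InducedFunctor

variable {R R' C}
variable {D : Type v₂} [Category.{w₂} D] [Preadditive D] [Linear R D] [Linear R' D]
  (G : C ⥤ D) [G.Additive] [G.Linear R]
  (hcompat : ∀ (X Y : D) (c : R) (f : X ⟶ Y), c • f = algebraMap R R' c • f)

instance inducedFunctor_additive : (inducedFunctor R R' G hcompat).Additive where
  map_add := map_add (TensorProduct.lift (inducedBil R R' G hcompat _ _)) _ _

/-- The induced functor restricts to `G` along the canonical functor. -/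
noncomputable def canonicalFunctorCompInducedFunctor :
    BaseChange.canonicalFunctor R R' C ⋙ inducedFunctor R R' G hcompat ≅ G :=
  NatIso.ofComponents (fun _ => Iso.refl _) fun {X Y} f => by
    have map_tmul_one : TensorProduct.lift (inducedBil R R' G hcompat X Y) (f ⊗ₜ[R] 1) = G.map f :=
      (TensorProduct.lift.tmul _ _).trans (one_smul R' _)
    exact (Category.comp_id _).trans (map_tmul_one.trans (Category.id_comp _).symm)

variable [Module.Flat R R'] [(BaseChange.canonicalFunctor R R' C).mapArrow.EssSurj]

theorem preservesFiniteLimits_inducedFunctor [HasFiniteLimits C] [PreservesFiniteLimits G] :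
    PreservesFiniteLimits (inducedFunctor R R' G hcompat) :=
  have := preservesFiniteLimits_of_natIso (canonicalFunctorCompInducedFunctor G hcompat).symm
  preservesFiniteLimits_of_comp_of_essSurj_mapArrow (BaseChange.canonicalFunctor R R' C) _

theorem preservesFiniteColimits_inducedFunctor [HasFiniteColimits C] [PreservesFiniteColimits G] :
    PreservesFiniteColimits (inducedFunctor R R' G hcompat) :=
  have := preservesFiniteColimits_of_natIso (canonicalFunctorCompInducedFunctor G hcompat).symm
  preservesFiniteColimits_of_comp_of_essSurj_mapArrow (BaseChange.canonicalFunctor R R' C) _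

end InducedFunctor

theorem induced_functor_on_base_change_is_exact_general
    (R : Type u) [CommRing R] (S : Submonoid R)
    (R' : Type u) [CommRing R'] [Algebra R R'] [IsLocalization S R']
    (C : Type v) [Category.{w} C] [Preadditive C] [HasFiniteLimits C] [HasFiniteColimits C]
    [Linear R C]
    (D : Type v₂) [Category.{w₂} D] [Preadditive D] [Linear R D] [Linear R' D]
    (hcompat : ∀ (X Y : D) (c : R) (f : X ⟶ Y), c • f = algebraMap R R' c • f)
    (G : C ⥤ D) [G.Additive] [G.Linear R]
    [PreservesFiniteLimits G] [PreservesFiniteColimits G] :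
    Nonempty (PreservesFiniteLimits (inducedFunctor R R' G hcompat)) ∧
    Nonempty (PreservesFiniteColimits (inducedFunctor R R' G hcompat)) :=
  have := IsLocalization.flat R' S
  have := BaseChange.essSurj_mapArrow_canonicalFunctor R' C S
  ⟨⟨preservesFiniteLimits_inducedFunctor G hcompat⟩,
    ⟨preservesFiniteColimits_inducedFunctor G hcompat⟩⟩

/-- Let `R` be a commutative ring, `S ⊆ R` a multiplicative subset, `𝒞` an
`R`-linear abelian category and `𝒟` an `S⁻¹R`-linear abelian category.  If `G : 𝒞 → 𝒟` is an
`R`-linear exact functor, then the induced functor `𝒞 ⊗_R S⁻¹R → 𝒟` (agreeing with `G` on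
objects and with the `S⁻¹R`-linear extension of `G` on morphisms) is exact. -/
theorem induced_functor_on_base_change_is_exact
    (R : Type u) [CommRing R] (S : Submonoid R)
    (C : Type v) [Category.{w} C] [Abelian C] [Linear R C]
    (D : Type v₂) [Category.{w₂} D] [Abelian D] [Linear R D] [Linear (Localization S) D]
    (hcompat : ∀ (X Y : D) (c : R) (f : X ⟶ Y),
      c • f = algebraMap R (Localization S) c • f)
    (G : C ⥤ D) [G.Additive] [G.Linear R]
    [Limits.PreservesFiniteLimits G] [Limits.PreservesFiniteColimits G] :
    Nonempty
      (Limits.PreservesFiniteLimits (inducedFunctor R (Localization S) G hcompat)) ∧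
    Nonempty
      (Limits.PreservesFiniteColimits (inducedFunctor R (Localization S) G hcompat)) := by
  exact induced_functor_on_base_change_is_exact_general R S (Localization S) C D hcompat G
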